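/- arXiv:1701.02452 — 3 statements merged into one kernel-verified Lean document; each statement's English description precedes it below -/
import Mathlib

section
/- Under these hypotheses, F_S is equal to the Dirichlet fundamental domain F = {x ∈ X : d(0,x) ≤ d(g.0, x) for all g ∈ Γ} of Γ centered at the base point 0. -/
/-- A geodesic metric space: any two points are joined by a geodesic parametrized by
arc length on `[0, dist x y]`. -/
def IsGeodesicSpace (X : Type*) [MetricSpace X] : Prop :=
  ∀ x y : X, ∃ γ : ℝ → X, γ 0 = x ∧ γ (dist x y) = y ∧
    ∀ s ∈ Set.Icc (0:ℝ) (dist x y), ∀ t ∈ Set.Icc (0:ℝ) (dist x y),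
      dist (γ s) (γ t) = |s - t|

namespace GlueAux

variable {Γ X : Type*} [TopologicalSpace X]

/-- Gluing relation on the disjoint union of the sets `A γ`. -/
def rel (A : Γ → Set X) (R : Γ → Γ → Prop) (p q : Σ γ : Γ, A γ) : Prop :=
  (p.2 : X) = q.2 ∧ R p.1 q.1

/-- The gluing setoid. -/
def glueSetoid (A : Γ → Set X) (R : Γ → Γ → Prop) (hrefl : ∀ a, R a a)
    (hsymm : ∀ a b, R a b → R b a)
    (htrans : ∀ a b c x, x ∈ A a → x ∈ A b → x ∈ A c → R a b → R b c → R a c) :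
    Setoid (Σ γ : Γ, A γ) where
  r := rel A R
  iseqv :=
    { refl := fun p => ⟨rfl, hrefl _⟩
      symm := fun {p q} h => ⟨h.1.symm, hsymm _ _ h.2⟩
      trans := fun {p q s} h h' => ⟨h.1.trans h'.1,
        htrans p.1 q.1 s.1 (p.2 : X) p.2.2 (h.1 ▸ q.2.2) ((h.1.trans h'.1) ▸ s.2.2) h.2 h'.2⟩ }

theorem eq_of_joined {E : Type*} [TopologicalSpace E] [SimplyConnectedSpace X] {f : E → X}
    (cov : IsCoveringMap f) {e e' : E} (hj : Joined e e') (h : f e = f e') : e = e' := by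
  obtain ⟨p⟩ := hj
  have hh := SimplyConnectedSpace.paths_homotopic ((p.map cov.continuous).cast rfl h)
    (Path.refl (f e))
  have h1 := cov.liftPath_apply_one_eq_of_homotopicRel hh e (by simp) (by simp)
  have h2 : (p : C(unitInterval, E)) = cov.liftPath
      ((p.map cov.continuous).cast rfl h : Path (f e) (f e)) e (by simp) := by
    rw [cov.eq_liftPath_iff']
    exact ⟨rfl, by simp⟩
  have h3 : ContinuousMap.const unitInterval e = cov.liftPath
      (Path.refl (f e) : Path (f e) (f e)) e (by simp) := by
    rw [cov.eq_liftPath_iff']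
    exact ⟨rfl, by simp⟩
  have h4 := DFunLike.congr_fun h2 1
  have h5 := DFunLike.congr_fun h3 1
  have h6 : (p : C(unitInterval, E)) 1 = ContinuousMap.const unitInterval e 1 :=
    h4.trans (h1.trans h5.symm)
  simpa using h6.symm

theorem glue [SimplyConnectedSpace X] (A : Γ → Set X) (R : Γ → Γ → Prop)
    (hA : ∀ a, IsOpen (A a)) (hpc : ∀ a, IsPathConnected (A a))
    (hrefl : ∀ a, R a a)
    (hsymm : ∀ a b, R a b → R b a)
    (htrans : ∀ a b c x, x ∈ A a → x ∈ A b → x ∈ A c → R a b → R b c → R a c)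
    (hev : ∀ x : X, ∃ V : Set X, IsOpen V ∧ x ∈ V ∧
      ∀ y ∈ V, ∀ a, y ∈ A a → ∃ b, V ⊆ A b ∧ R a b)
    (a b : Γ) (hab : Relation.ReflTransGen (fun a b => R a b ∧ (A a ∩ A b).Nonempty) a b)
    (x : X) (hxa : x ∈ A a) (hxb : x ∈ A b) : R a b := by
  let s := glueSetoid A R hrefl hsymm htrans
  let q : (Σ γ : Γ, A γ) → Quotient s := Quotient.mk s
  have hqc : Continuous q := continuous_quotient_mk'
  have hqeq : ∀ p p', q p = q p' ↔ ((p.2 : X) = p'.2 ∧ R p.1 p'.1) := fun p p' => Quotient.eq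
  let f : Quotient s → X := Quotient.lift (fun p => (p.2 : X)) (fun p p' h => h.1)
  have hfq : ∀ p, f (q p) = p.2 := fun p => rfl
  have hqo : ∀ (c : Γ) (W : Set X), IsOpen W →
      IsOpen {e | ∃ (z : X) (hz : z ∈ A c), z ∈ W ∧ e = q ⟨c, z, hz⟩} := by
    intro c W hW
    rw [← isQuotientMap_quotient_mk'.isOpen_preimage, isOpen_sigma_iff]
    intro d
    by_cases hdc : R d c
    · have : ((fun z : A d => (⟨d, z⟩ : Σ γ : Γ, A γ)) ⁻¹' (q ⁻¹'
        {e | ∃ (z : X) (hz : z ∈ A c), z ∈ W ∧ e = q ⟨c, z, hz⟩}) : Set (A d))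
          = Subtype.val ⁻¹' (W ∩ A c) := by
        ext z
        constructor
        · rintro ⟨w, hw, hwW, h⟩
          have h' := ((hqeq ⟨d, z⟩ ⟨c, w, hw⟩).1 h).1
          change (z : X) = w at h'
          change (z : X) ∈ W ∩ A c
          rw [h']; exact ⟨hwW, hw⟩
        · rintro ⟨h1, h2⟩
          exact ⟨z, h2, h1, (hqeq ⟨d, z⟩ ⟨c, z, h2⟩).2 ⟨rfl, hdc⟩⟩
      have h2 : IsOpen ((fun z : A d => (⟨d, z⟩ : Σ γ : Γ, A γ)) ⁻¹' (q ⁻¹'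
        {e | ∃ (z : X) (hz : z ∈ A c), z ∈ W ∧ e = q ⟨c, z, hz⟩}) : Set (A d)) := by
        rw [this]
        exact (hW.inter (hA c)).preimage continuous_subtype_val
      exact h2
    · convert isOpen_empty
      ext z
      simp only [Set.mem_empty_iff_false, iff_false]
      rintro ⟨w, hw, hwW, h⟩
      exact hdc ((hqeq ⟨d, z⟩ ⟨c, w, hw⟩).1 h).2
  have hsec : ∀ c : Γ, Continuous (fun z : A c => q ⟨c, z⟩) := fun c =>
    hqc.comp continuous_sigmaMk
  have cov : IsCoveringMap f := by
    intro x
    obtain ⟨V, hVo, hxV, hV⟩ := hev x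
    let ι := {u : Set (Quotient s) // ∃ c, V ⊆ A c ∧
      u = {e | ∃ (z : X) (hz : z ∈ A c), z ∈ V ∧ e = q ⟨c, z, hz⟩}}
    letI : TopologicalSpace ι := ⊥
    haveI : DiscreteTopology ι := ⟨rfl⟩
    have hex : f ⁻¹' V ⊆ ⋃ i : ι, i.1 := by
      intro e he
      obtain ⟨⟨c, z, hz⟩, rfl⟩ := Quotient.exists_rep e
      have hzV : z ∈ V := he
      obtain ⟨b, hb, hcb⟩ := hV z hzV c hz
      refine Set.mem_iUnion.2 ⟨⟨_, b, hb, rfl⟩, z, hb hzV, hzV, ?_⟩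
      exact (hqeq ⟨c, z, hz⟩ ⟨b, z, hb hzV⟩).2 ⟨rfl, hcb⟩
    by_cases hne : Nonempty ι
    · haveI : Nonempty (X → Quotient s) := by
        obtain ⟨⟨u, c, hc, hu⟩⟩ := hne
        exact ⟨fun _ => q ⟨c, x, hc hxV⟩⟩
      have key : IsEvenlyCovered f x ι := by
        refine IsEvenlyCovered.of_trivialization
          (t := IsOpen.trivializationDiscrete (f := f) (fun i : ι => i.1) V hVo ?_ ?_ ?_ ?_ hex) hxV
        · rintro ⟨u, c, hc, rfl⟩ W hWV
          have : f ⁻¹' W ∩ {e | ∃ (z : X) (hz : z ∈ A c), z ∈ V ∧ e = q ⟨c, z, hz⟩}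
              = {e | ∃ (z : X) (hz : z ∈ A c), z ∈ W ∧ e = q ⟨c, z, hz⟩} := by
            ext e
            constructor
            · rintro ⟨h1, z, hz, hzV, rfl⟩
              exact ⟨z, hz, h1, rfl⟩
            · rintro ⟨z, hz, hzW, rfl⟩
              exact ⟨hzW, z, hz, hWV hzW, rfl⟩
          change IsOpen W ↔ IsOpen (f ⁻¹' W ∩ {e | ∃ (z : X) (hz : z ∈ A c), z ∈ V ∧ e = q ⟨c, z, hz⟩})
          rw [this]
          refine ⟨hqo c W, fun ho => ?_⟩
          have h1 := (hA c).isOpenMap_subtype_val _ (ho.preimage (hsec c))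
          convert h1
          ext z
          constructor
          · intro hz
            exact ⟨⟨z, hc (hWV hz)⟩, ⟨z, hc (hWV hz), hz, rfl⟩, rfl⟩
          · rintro ⟨⟨z', hz'⟩, ⟨w, hw, hwW, h⟩, rfl⟩
            have h' : z' = w := ((hqeq _ _).1 h).1
            exact h' ▸ hwW
        · rintro ⟨u, c, hc, rfl⟩ _ ⟨z, hz, hzV, rfl⟩ _ ⟨w, hw, hwV, rfl⟩ h
          have h' : z = w := h
          subst h'; rfl
        · rintro ⟨u, c, hc, rfl⟩ z hz
          exact ⟨q ⟨c, z, hc hz⟩, ⟨z, hc hz, hz, rfl⟩, rfl⟩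
        · rintro ⟨u, c, hc, rfl⟩ ⟨u', c', hc', rfl⟩ hneq
          change Disjoint _ _
          rw [Set.disjoint_left]
          rintro _ ⟨z, hz, hzV, rfl⟩ ⟨w, hw, hwV, h⟩
          apply hneq
          have hR : R c c' := ((hqeq _ _).1 h).2
          apply Subtype.ext
          ext e
          constructor
          · rintro ⟨z, hz, hzV, rfl⟩
            exact ⟨z, hc' hzV, hzV, (hqeq _ _).2 ⟨rfl, hR⟩⟩
          · rintro ⟨z, hz, hzV, rfl⟩
            exact ⟨z, hc hzV, hzV, (hqeq _ _).2 ⟨rfl, hsymm _ _ hR⟩⟩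
      exact key.to_isEvenlyCovered_preimage
    · haveI : IsEmpty ι := not_nonempty_iff.1 hne
      have hem : f ⁻¹' V = ∅ := by
        rw [Set.iUnion_of_empty] at hex
        exact Set.subset_empty_iff.1 hex
      exact (IsEvenlyCovered.of_preimage_eq_empty ι (hVo.mem_nhds hxV) hem).to_isEvenlyCovered_preimage
  have hjA : ∀ (c : Γ) (z w : A c), Joined (q ⟨c, z⟩) (q ⟨c, w⟩) := by
    intro c z w
    have := isPathConnected_iff_pathConnectedSpace.1 (hpc c)
    exact (PathConnectedSpace.joined z w).map (hsec c)
  have hj : ∀ (z : X) (hz : z ∈ A a) (w : X) (hw : w ∈ A b),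
      Joined (q ⟨a, z, hz⟩) (q ⟨b, w, hw⟩) := by
    clear hxb hxa
    induction hab with
    | refl => exact fun z hz w hw => hjA a ⟨z, hz⟩ ⟨w, hw⟩
    | @tail c d _ hcd ih =>
      intro z hz w hw
      obtain ⟨hR, m, hm1, hm2⟩ := hcd
      have h1 := ih z hz m hm1
      have h2 : q ⟨c, m, hm1⟩ = q ⟨d, m, hm2⟩ := (hqeq _ _).2 ⟨rfl, hR⟩
      rw [h2] at h1
      exact h1.trans (hjA d ⟨m, hm2⟩ ⟨w, hw⟩)
  exact ((hqeq _ _).1 (eq_of_joined cov (hj x hxa x hxb) rfl)).2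

end GlueAux

theorem ball_pathConnected {X : Type*} [MetricSpace X] (hgeo : IsGeodesicSpace X) (c : X) (r : ℝ)
    (hr : 0 < r) : IsPathConnected (Metric.ball c r) := by
  refine ⟨c, Metric.mem_ball_self hr, fun {y} hy => ?_⟩
  obtain ⟨γ, h0, h1, hd⟩ := hgeo c y
  rw [Metric.mem_ball, dist_comm] at hy
  have hcont : ContinuousOn γ (Set.Icc 0 (dist c y)) := by
    refine (LipschitzOnWith.of_dist_le_mul (K := 1) fun s hs t ht => ?_).continuousOn
    rw [hd s hs t ht, Real.dist_eq]; simp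
  have hpc := (convex_Icc (0:ℝ) (dist c y)).isPathConnected ⟨0, by simp⟩
  have h2 := (hpc.image' hcont).joinedIn c ⟨0, by simp, h0⟩ y ⟨dist c y, by simp, h1⟩
  refine h2.mono ?_
  rintro _ ⟨t, ht, rfl⟩
  have := hd t ht 0 (by simp)
  rw [h0, sub_zero, abs_of_nonneg ht.1] at this
  rw [Metric.mem_ball, this]
  exact ht.2.trans_lt hy

theorem stmt_1
    {Γ X : Type*} [Group Γ] [MetricSpace X] [MulAction Γ X]
    (hiso : ∀ g : Γ, Isometry (fun x : X => g • x))
    [SimplyConnectedSpace X] (hgeo : IsGeodesicSpace X)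
    (S : Set Γ) (hfin : S.Finite) (hsymm : ∀ g ∈ S, g⁻¹ ∈ S)
    (hgen : Subgroup.closure S = ⊤)
    (x₀ : X)
    (FS : Set X) (hFS : FS = {x : X | ∀ g ∈ S, dist x₀ x ≤ dist (g • x₀) x})
    (hbdd : BddAbove ((fun x : X => dist x₀ x) '' FS))
    (r₀ : ℝ) (hr₀ : r₀ = sSup ((fun x : X => dist x₀ x) '' FS))
    (r₁ : ℝ) (hr₁ : 2 * r₀ < r₁)
    (ha : ∀ g ∈ S, dist (g • x₀) x₀ ≤ r₁)
    (hb : ∀ g ∈ S, ∀ g' ∈ S, dist ((g * g') • x₀) x₀ ≤ r₁ → g * g' ∈ S) :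
    FS = {x : X | ∀ g : Γ, dist x₀ x ≤ dist (g • x₀) x} := by
  have hdist : ∀ (g : Γ) (x y : X), dist (g • x) (g • y) = dist x y := fun g x y => (hiso g).dist_eq x y
  have hdist' : ∀ (g : Γ) (x y : X), dist (g • x) y = dist x (g⁻¹ • y) := fun g x y => by
    rw [← hdist g x, smul_inv_smul]
  have hle : ∀ x ∈ FS, dist x₀ x ≤ r₀ := fun x hx => hr₀ ▸ le_csSup hbdd ⟨x, hx, rfl⟩
  have hr0 : 0 ≤ r₀ := by
    have := hle x₀ (by rw [hFS]; intro g _; simp)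
    simpa using this
  have hmem : ∀ x, x ∈ FS ↔ ∀ g ∈ S, dist x₀ x ≤ dist (g • x₀) x := fun x => by rw [hFS]; rfl
  apply Set.Subset.antisymm
  swap
  · intro x hx
    exact (hmem x).2 fun g _ => hx g
  intro x hx g
  rcases S.eq_empty_or_nonempty with hS | hS
  · have : g ∈ Subgroup.closure S := hgen ▸ Subgroup.mem_top g
    rw [hS, Subgroup.closure_empty, Subgroup.mem_bot] at this
    simp [this]
  have h1S : (1 : Γ) ∈ S := by
    obtain ⟨s, hs⟩ := hS
    have := hb s hs s⁻¹ (hsymm s hs) (by simp; linarith)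
    simpa using this
  -- enlarge the radius
  obtain ⟨r, hr, hbr⟩ : ∃ r : ℝ, r₁ < 2 * r ∧ ∀ g ∈ S, ∀ g' ∈ S,
      dist ((g * g') • x₀) x₀ < 2 * r → g * g' ∈ S := by
    have hf : ((fun p : Γ × Γ => dist ((p.1 * p.2) • x₀) x₀) '' (S ×ˢ S) ∩ Set.Ioi r₁).Finite :=
      ((hfin.prod hfin).image _).inter_of_left _
    have : ∀ᶠ t in nhdsWithin r₁ (Set.Ioi r₁), ∀ d ∈ ((fun p : Γ × Γ => dist ((p.1 * p.2) • x₀) x₀) '' (S ×ˢ S) ∩ Set.Ioi r₁), t < d := by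
      rw [Filter.eventually_all_finite hf]
      intro d hd
      exact (eventually_lt_nhds hd.2).filter_mono nhdsWithin_le_nhds
    obtain ⟨t, ht, htr⟩ := (this.and self_mem_nhdsWithin).exists
    refine ⟨t / 2, by rw [mul_div_cancel₀ _ two_ne_zero]; exact htr, fun g hg g' hg' hd => ?_⟩
    rw [mul_div_cancel₀ _ two_ne_zero] at hd
    apply hb g hg g' hg'
    by_contra! hlt
    exact absurd (ht _ ⟨⟨(g, g'), ⟨hg, hg'⟩, rfl⟩, hlt⟩) (not_lt.2 hd.le)
  have hdesc : ∀ z, dist x₀ z < r → ∃ s ∈ S, dist (s • x₀) z ≤ r₀ := by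
    intro z hz
    obtain ⟨s, hs, hmin⟩ := Set.exists_min_image S (fun s => dist (s • x₀) z) hfin hS
    refine ⟨s, hs, ?_⟩
    rw [hdist']
    apply hle
    rw [hmem]
    intro g hg
    rw [← hdist', ← hdist s (g • x₀), smul_inv_smul, smul_smul]
    by_contra! hlt
    have h1 := hmin 1 h1S
    simp only [one_smul] at h1
    have h2 := dist_triangle_right ((s * g) • x₀) x₀ z
    exact absurd (hmin _ (hbr s hs g hg (by linarith))) (not_le.2 hlt)
  by_contra! hlt
  have hxr := hle x hx
  let A : Γ → Set X := fun a => Metric.ball (a • x₀) r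
  have hgS : (1:Γ)⁻¹ * g ∈ S := by
    refine GlueAux.glue A (fun a b => a⁻¹ * b ∈ S) (fun a => Metric.isOpen_ball)
      (fun a => ball_pathConnected hgeo _ _ (by linarith)) (fun a => by simpa using h1S)
      (fun a b h => by simpa using hsymm _ h) ?_ ?_ 1 g ?_ x ?_ ?_
    · intro a b c y ha hb' hc hab hbc
      have : a⁻¹ * c = (a⁻¹ * b) * (b⁻¹ * c) := by group
      rw [this]
      apply hbr _ hab _ hbc
      rw [← this, mul_smul, hdist', inv_inv]
      have h1 := Metric.mem_ball'.1 ha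
      have h2 := Metric.mem_ball'.1 hc
      have h3 := dist_triangle_right (c • x₀) (a • x₀) y
      linarith
    · intro y
      refine ⟨Metric.ball y ((r - r₀) / 2), Metric.isOpen_ball,
        Metric.mem_ball_self (by linarith), fun w hw a ha' => ?_⟩
      obtain ⟨s, hs, hsd⟩ := hdesc (a⁻¹ • w) (by rw [← hdist']; exact Metric.mem_ball'.1 ha')
      refine ⟨a * s, fun v hv => ?_, by simpa using hs⟩
      rw [← hdist a, smul_smul, smul_inv_smul] at hsd
      have h1 := Metric.mem_ball.1 hw
      have h2 := Metric.mem_ball.1 hv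
      have h3 := dist_triangle4_right ((a * s) • x₀) v w y
      have h4 := dist_triangle_right v w y
      have h5 := dist_triangle v w ((a * s) • x₀)
      rw [dist_comm w] at h5
      exact Metric.mem_ball.2 (by linarith)
    · have hg : g ∈ Subgroup.closure S := hgen ▸ Subgroup.mem_top g
      have : ∀ h : Γ, Relation.ReflTransGen
          (fun a b => a⁻¹ * b ∈ S ∧ (A a ∩ A b).Nonempty) h (h * g) := by
        clear hlt
        induction hg using Subgroup.closure_induction with
        | mem s hs =>
          intro h
          refine Relation.ReflTransGen.single ⟨by simpa using hs, ?_⟩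
          obtain ⟨γ, h0, h1, hd⟩ := hgeo (h • x₀) ((h * s) • x₀)
          have hD : dist (h • x₀) ((h * s) • x₀) ≤ r₁ := by
            rw [mul_smul, hdist, dist_comm]; exact ha s hs
          set D := dist (h • x₀) ((h * s) • x₀)
          have hD0 : 0 ≤ D := dist_nonneg
          have hm : D / 2 ∈ Set.Icc 0 D := ⟨by linarith, by linarith⟩
          refine ⟨γ (D / 2), ?_, ?_⟩
          · have := hd _ hm 0 ⟨le_rfl, hD0⟩
            rw [h0, sub_zero, abs_of_nonneg hm.1] at this
            exact Metric.mem_ball.2 (by linarith)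
          · have := hd _ hm D ⟨hD0, le_rfl⟩
            rw [h1, abs_of_nonpos (by linarith)] at this
            exact Metric.mem_ball.2 (by linarith)
        | one => intro h; rw [mul_one]
        | mul a b _ _ iha ihb =>
          intro h
          rw [← mul_assoc]
          exact (iha h).trans (ihb (h * a))
        | inv a _ iha =>
          intro h
          have := iha (h * a⁻¹)
          rw [inv_mul_cancel_right] at this
          have hsy : Std.Symm (fun a b : Γ => a⁻¹ * b ∈ S ∧ (A a ∩ A b).Nonempty) :=
            ⟨fun a b hab =>
              ⟨by simpa using hsymm _ hab.1, by rw [Set.inter_comm]; exact hab.2⟩⟩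
          exact Relation.ReflTransGen.symmetric.symm _ _ this
      simpa using this 1
    · exact Metric.mem_ball'.2 (by rw [one_smul]; linarith)
    · exact Metric.mem_ball'.2 (by linarith)
  rw [inv_one, one_mul] at hgS
  exact absurd ((hmem x).1 hx g hgS) (not_le.2 hlt)
end

section
/- Under these hypotheses, if moreover every g ∈ Γ \ {1} acts nontrivially on X (so that Γ may be regarded as a subgroup of the group C(X) of continuous maps X → X), then Γ is discrete in C(X) for the compact-open topology; that is, there is an open neighborhood V of the identity map in the compact-open topology with Γ ∩ V = {1}. -/
open Topology Set in
theorem exists_global_section {X : Type*} [MetricSpace X] [SimplyConnectedSpace X]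
    [LocallyPathConnectedSpace X] {Fib : X → Type*} {ε : ℝ} (hε : 0 < ε)
    (T : ∀ x y : X, dist x y < ε → Fib x → Fib y)
    (hid : ∀ x h a, T x x h a = a)
    (hcomp : ∀ x y z h₁ h₂ h₃ a, T y z h₂ (T x y h₁ a) = T x z h₃ a)
    (x₀ : X) (a₀ : Fib x₀) :
    ∃ σ : ∀ x, Fib x, σ x₀ = a₀ ∧ ∀ x, ∀ᶠ y in 𝓝 x, ∃ h h',
      T x y h (σ x) = σ y ∧ T y x h' (σ y) = σ x := by
  have hs : ∀ {x y : X}, dist x y < ε → dist y x < ε := fun h => by rwa [dist_comm]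
  have hself : ∀ x : X, dist x x < ε := fun x => by simpa using hε
  have hinv : ∀ x y h h' a, T y x h' (T x y h a) = a := fun x y h h' a => by
    rw [hcomp x y x h h' (hself x), hid]
  have hφ : ∀ x, Nonempty (Fib x ≃ Fib x₀) := by
    intro x
    refine PreconnectedSpace.induction₂' (fun x y => Nonempty (Fib x ≃ Fib y)) (fun x => ?_)
      ⟨fun a b c ⟨e⟩ ⟨f⟩ => ⟨e.trans f⟩⟩ x x₀
    filter_upwards [Metric.ball_mem_nhds x hε] with y hy
    have e : Fib y ≃ Fib x := ⟨T y x hy, T x y (hs hy), hinv _ _ _ _, hinv _ _ _ _⟩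
    exact ⟨⟨e.symm⟩, ⟨e⟩⟩
  have φ := fun x => (hφ x).some
  let _ : TopologicalSpace (Fib x₀) := ⊥
  have : DiscreteTopology (Fib x₀) := ⟨rfl⟩
  classical
  have hin : ∀ {x y z : X}, z ∈ Metric.ball x (ε/2) → z ∈ Metric.ball y (ε/2) → dist x y < ε := by
    intro x y z h1 h2
    rw [Metric.mem_ball] at h1 h2
    have := dist_triangle_left x y z
    linarith
  let Z : FiberBundleCore X X (Fib x₀) :=
    { baseSet := fun x => Metric.ball x (ε / 2)
      isOpen_baseSet := fun x => Metric.isOpen_ball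
      indexAt := id
      mem_baseSet_at := fun x => Metric.mem_ball_self (by linarith)
      coordChange := fun i j _ v =>
        if h : dist i j < ε then φ j (T i j h ((φ i).symm v)) else v
      coordChange_self := by
        intro i x hx v
        simp [hε, hid]
      continuousOn_coordChange := by
        intro i j
        exact (continuous_of_discreteTopology (f := fun v : Fib x₀ =>
          if h : dist i j < ε then φ j (T i j h ((φ i).symm v)) else v)
          |>.comp continuous_snd).continuousOn
      coordChange_comp := by
        rintro i j k x ⟨⟨h1, h2⟩, h3⟩ v
        simp only [dif_pos (hin h1 h2), dif_pos (hin h2 h3), dif_pos (hin h1 h3),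
          Equiv.symm_apply_apply]
        rw [hcomp] }
  have hcov : IsCoveringMap (Bundle.TotalSpace.proj : Z.TotalSpace → X) :=
    FiberBundle.isCoveringMap (F := Fib x₀) (E := Z.Fiber)
  obtain ⟨F, ⟨hF0, hFp⟩, -⟩ := hcov.existsUnique_continuousMap_lifts (ContinuousMap.id X) x₀
    (⟨x₀, φ x₀ a₀⟩ : Z.TotalSpace) rfl
  have hp : ∀ x, (F x).proj = x := fun x => congrFun hFp x
  let f : X → Fib x₀ := fun x => (F x).snd
  refine ⟨fun x => (φ x).symm (f x), ?_, ?_⟩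
  · have : f x₀ = φ x₀ a₀ := by
      change (F x₀).snd = _
      rw [hF0]
    simp [this]
  intro x
  have hc : ContinuousAt (fun y => (Z.localTriv x (F y)).2) x := by
    refine continuous_snd.continuousAt.comp
      (ContinuousAt.comp (f := F) (g := Z.localTriv x) ?_ F.continuous.continuousAt)
    apply (Z.localTriv x).continuousAt
    rw [Z.mem_localTriv_source, ]
    change (F x).proj ∈ Metric.ball x (ε / 2)
    rw [hp]; exact Metric.mem_ball_self (by linarith)
  have hv : ∀ y, ∀ h : dist y x < ε, (Z.localTriv x (F y)).2 = φ x (T y x h ((φ y).symm (f y))) := by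
    intro y h
    rw [Z.localTriv_apply]
    change (if h : dist (F y).proj x < ε then
      φ x (T (F y).proj x h ((φ (F y).proj).symm (f y))) else f y) = _
    rw [hp y, dif_pos h]
  have hev := hc.eventually (p := fun v => v = (Z.localTriv x (F x)).2)
    (by simp [nhds_discrete])
  filter_upwards [hev, Metric.ball_mem_nhds x hε] with y hy hyb
  have hyx : dist y x < ε := hyb
  rw [hv y hyx, hv x (hself x), hid] at hy
  have hy' := (φ x).injective hy
  refine ⟨hs hyx, hyx, ?_, hy'⟩
  rw [← hy', hinv]

theorem IsGeodesicSpace.joinedIn_aux {X : Type*} [MetricSpace X] (hgeo : IsGeodesicSpace X)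
    {W : Set X} {x y : X} (hW : ∀ z, dist x z ≤ dist x y → z ∈ W) : JoinedIn W x y := by
  obtain ⟨γ, h0, h1, hγ⟩ := hgeo x y
  have hd : (0:ℝ) ≤ dist x y := dist_nonneg
  have hmem : ∀ t ∈ unitInterval, t * dist x y ∈ Set.Icc (0:ℝ) (dist x y) := by
    rintro t ⟨ht0, ht1⟩
    exact ⟨by positivity, by nlinarith⟩
  have hzero : (0:ℝ) ∈ Set.Icc (0:ℝ) (dist x y) := ⟨le_rfl, hd⟩
  have hc : ContinuousOn γ (Set.Icc (0:ℝ) (dist x y)) := by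
    have : LipschitzOnWith 1 γ (Set.Icc (0:ℝ) (dist x y)) := by
      apply LipschitzOnWith.of_dist_le_mul
      intro s hs t ht
      rw [hγ s hs t ht, Real.dist_eq]; simp
    exact this.continuousOn
  refine JoinedIn.ofLine (f := fun t => γ (t * dist x y)) ?_ (by simpa using h0)
    (by simpa using h1) ?_
  · exact hc.comp (by fun_prop) hmem
  · rintro _ ⟨t, ht, rfl⟩
    apply hW
    have := hγ 0 hzero _ (hmem t ht)
    rw [h0] at this
    have h2 := hmem t ht
    rw [this, zero_sub, abs_neg, abs_of_nonneg h2.1]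
    exact h2.2

theorem IsGeodesicSpace.midpoint_aux {X : Type*} [MetricSpace X] (hgeo : IsGeodesicSpace X)
    (x y : X) : ∃ m, dist x m ≤ dist x y / 2 ∧ dist y m ≤ dist x y / 2 := by
  obtain ⟨γ, h0, h1, hγ⟩ := hgeo x y
  have hd : (0:ℝ) ≤ dist x y := dist_nonneg
  have a1 : dist x y / 2 ∈ Set.Icc (0:ℝ) (dist x y) := ⟨by linarith, by linarith⟩
  refine ⟨γ (dist x y / 2), ?_, ?_⟩
  · have := hγ 0 ⟨le_rfl, hd⟩ _ a1
    rw [h0] at this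
    rw [this, abs_le]; constructor <;> linarith
  · have := hγ (dist x y) ⟨hd, le_rfl⟩ _ a1
    rw [h1] at this
    rw [this, abs_le]; constructor <;> linarith

theorem IsGeodesicSpace.locallyPathConnected_aux {X : Type*} [MetricSpace X]
    (hgeo : IsGeodesicSpace X) : LocallyPathConnectedSpace X := by
  refine LocallyPathConnectedSpace.of_bases (fun x => Metric.nhds_basis_ball) ?_
  intro x r hr
  refine ⟨x, Metric.mem_ball_self hr, fun {y} hy => hgeo.joinedIn_aux fun z hz => ?_⟩
  rw [Metric.mem_ball, dist_comm] at hy ⊢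
  exact hz.trans_lt hy

theorem IsGeodesicSpace.preconnected_closedBall_aux {X : Type*} [MetricSpace X]
    (hgeo : IsGeodesicSpace X) (x : X) {r : ℝ} (hr : 0 ≤ r) :
    IsPreconnected (Metric.closedBall x r) := by
  have : IsPathConnected (Metric.closedBall x r) := by
    refine ⟨x, Metric.mem_closedBall_self hr, fun {y} hy => hgeo.joinedIn_aux fun z hz => ?_⟩
    rw [Metric.mem_closedBall, dist_comm] at hy ⊢
    exact hz.trans hy
  exact this.isConnected.isPreconnected

open Topology in
theorem exists_sheet {Γ X : Type*} [Group Γ] [MetricSpace X] [SimplyConnectedSpace X]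
    (hgeo : IsGeodesicSpace X) (p : Γ → X) (S : Set Γ) (hone : 1 ∈ S)
    (hsymm : ∀ g ∈ S, g⁻¹ ∈ S) (R r₀ : ℝ) (h0 : 0 ≤ r₀) (hR : r₀ < R)
    (htrans : ∀ g h k x, dist (p g) x ≤ R → dist (p k) x ≤ R → g⁻¹ * h ∈ S → h⁻¹ * k ∈ S →
      g⁻¹ * k ∈ S)
    (hnear : ∀ g x, dist (p g) x ≤ R → ∃ s ∈ S, dist (p (g * s)) x ≤ r₀) :
    ∃ P : Γ → X → Prop, P 1 (p 1) ∧
      (∀ g x y, dist (p g) x ≤ R → dist (p g) y ≤ R → P g x → P g y) ∧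
      (∀ g h x, P g x → P h x → g⁻¹ * h ∈ S) ∧
      (∀ g h x, P g x → dist (p h) x ≤ R → g⁻¹ * h ∈ S → P h x) := by
  have := hgeo.locallyPathConnected_aux
  let st : ∀ x : X, Setoid {g : Γ // dist (p g) x ≤ R} := fun x =>
    { r := fun g h => g.1⁻¹ * h.1 ∈ S
      iseqv := ⟨fun g => by simpa using hone, fun {g h} hgh => by simpa using hsymm _ hgh,
        fun {g h k} h1 h2 => htrans _ _ _ x g.2 k.2 h1 h2⟩ }
  let mk : ∀ (x : X) (g : Γ), dist (p g) x ≤ R → Quotient (st x) := fun x g h =>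
    Quotient.mk (st x) ⟨g, h⟩
  have mk_eq : ∀ x g h hg hh, mk x g hg = mk x h hh ↔ g⁻¹ * h ∈ S := by
    intro x g h hg hh
    exact Quotient.eq (r := st x)
  have rep : ∀ x (q : Quotient (st x)), ∃ g, ∃ h : dist (p g) x ≤ R, dist (p g) x ≤ r₀ ∧
      q = mk x g h := by
    intro x q
    induction q using Quotient.inductionOn with
    | h g =>
      obtain ⟨s, hs, hd⟩ := hnear g.1 x g.2
      refine ⟨g.1 * s, hd.trans hR.le, hd, ?_⟩
      refine (mk_eq x g.1 _ g.2 _).2 ?_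
      simpa using hs
  choose ρ hρ hρ' hρq using rep
  have near : ∀ x y q, dist x y < R - r₀ → dist (p (ρ x q)) y ≤ R := by
    intro x y q h
    have := dist_triangle (p (ρ x q)) x y
    have := hρ' x q
    linarith
  let T : ∀ x y : X, dist x y < R - r₀ → Quotient (st x) → Quotient (st y) := fun x y h q =>
    mk y (ρ x q) (near x y q h)
  have hT : ∀ x y h g hx hy, T x y h (mk x g hx) = mk y g hy := by
    intro x y h g hx hy
    refine (mk_eq ..).2 ?_
    have := hρq x (mk x g hx)
    exact (mk_eq ..).1 this.symm
  have hT1 : 0 < R - r₀ := by linarith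
  obtain ⟨σ, hσ0, hσ⟩ := exists_global_section hT1 T
    (by
      intro x h a
      exact (hρq x a).symm)
    (by
      intro x y z h₁ h₂ h₃ a
      change T y z h₂ (mk y (ρ x a) _) = mk z (ρ x a) _
      exact hT y z h₂ (ρ x a) (near x y a h₁) (near x z a h₃))
    (p 1) (mk (p 1) 1 (by simp; linarith))
  refine ⟨fun g x => ∃ h : dist (p g) x ≤ R, σ x = mk x g h, ⟨_, hσ0⟩, ?_, ?_, ?_⟩
  · intro g x y hx hy hP
    have hpre := hgeo.preconnected_closedBall_aux (p g) (h0.trans hR.le)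
    have hx' : x ∈ Metric.closedBall (p g) R := by rwa [Metric.mem_closedBall']
    have hy' : y ∈ Metric.closedBall (p g) R := by rwa [Metric.mem_closedBall']
    refine hpre.induction₂' (fun x y => (∃ h : dist (p g) x ≤ R, σ x = mk x g h) →
      (∃ h : dist (p g) y ≤ R, σ y = mk y g h)) ?_ ?_ hx' hy' hP
    · intro x hx
      filter_upwards [nhdsWithin_le_nhds (hσ x), self_mem_nhdsWithin] with y ⟨h, h', h1, h2⟩ hy
      rw [Metric.mem_closedBall'] at hx hy
      constructor
      · rintro ⟨k, hk⟩
        exact ⟨hy, by rw [← h1, hk, hT _ _ h]⟩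
      · rintro ⟨k, hk⟩
        exact ⟨hx, by rw [← h2, hk, hT _ _ h']⟩
    · intro x y z _ _ _ h1 h2 h3
      exact h2 (h1 h3)
  · rintro g h x ⟨hg, hg'⟩ ⟨hh, hh'⟩
    exact (mk_eq ..).1 (hg'.symm.trans hh')
  · rintro g h x ⟨hg, hg'⟩ hh hS
    exact ⟨hh, hg'.trans ((mk_eq ..).2 hS)⟩

theorem mem_of_close {Γ X : Type*} [Group Γ] [MetricSpace X] [MulAction Γ X]
    (hiso : ∀ g : Γ, Isometry (fun x : X => g • x))
    [SimplyConnectedSpace X] (hgeo : IsGeodesicSpace X)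
    (S : Set Γ) (hfin : S.Finite) (hne : S.Nonempty) (hsymm : ∀ g ∈ S, g⁻¹ ∈ S)
    (hgen : Subgroup.closure S = ⊤)
    (x₀ : X) (r₀ r₁ : ℝ) (hr : 0 ≤ r₀) (hr₁ : 2 * r₀ < r₁)
    (hF : ∀ x, (∀ g ∈ S, dist x₀ x ≤ dist (g • x₀) x) → dist x₀ x ≤ r₀)
    (ha : ∀ g ∈ S, dist (g • x₀) x₀ ≤ r₁)
    (hb : ∀ g ∈ S, ∀ g' ∈ S, dist ((g * g') • x₀) x₀ ≤ r₁ → g * g' ∈ S)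
    (g : Γ) (hg : dist (g • x₀) x₀ ≤ r₁ / 2) : g ∈ S := by
  have hone : (1 : Γ) ∈ S := by
    obtain ⟨s, hs⟩ := hne
    have := hb s hs s⁻¹ (hsymm s hs) (by simp; linarith)
    simpa using this
  have hinv : ∀ (g : Γ) (x y : X), dist (g⁻¹ • x) y = dist x (g • y) := by
    intro g x y
    have := (hiso g).dist_eq (g⁻¹ • x) y
    simp only [smul_inv_smul] at this
    exact this.symm
  have htrans : ∀ (g h k : Γ) (x : X), dist (g • x₀) x ≤ r₁ / 2 → dist (k • x₀) x ≤ r₁ / 2 →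
      g⁻¹ * h ∈ S → h⁻¹ * k ∈ S → g⁻¹ * k ∈ S := by
    intro g h k x h1 h2 h3 h4
    have h5 : g⁻¹ * k = (g⁻¹ * h) * (h⁻¹ * k) := by group
    rw [h5]
    apply hb _ h3 _ h4
    rw [← h5, mul_smul, hinv]
    have := dist_triangle_right (k • x₀) (g • x₀) x
    linarith
  have hnear : ∀ (g : Γ) (x : X), dist (g • x₀) x ≤ r₁ / 2 →
      ∃ s ∈ S, dist ((g * s) • x₀) x ≤ r₀ := by
    intro g x hx
    obtain ⟨s, hs, hmin⟩ := hfin.exists_minimalFor (fun s => dist ((g * s) • x₀) x) S ⟨1, hone⟩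
    have hmin' : ∀ t ∈ S, dist ((g * s) • x₀) x ≤ dist ((g * t) • x₀) x := by
      intro t ht
      by_contra hlt
      exact hlt (hmin ht (not_le.1 hlt).le)
    refine ⟨s, hs, ?_⟩
    have key := hF ((g * s)⁻¹ • x) ?_
    · rw [dist_comm, hinv, dist_comm] at key
      exact key
    intro h hh
    rw [dist_comm, hinv, dist_comm, dist_comm (h • x₀), hinv, dist_comm x, ← mul_smul]
    by_contra hlt
    rw [not_le] at hlt
    have h1 : dist ((g * s) • x₀) x ≤ r₁ / 2 := by
      have := hmin' 1 hone
      rw [mul_one] at this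
      linarith
    have h2 : s * h ∈ S := by
      have := htrans g (g * s) (g * s * h) x hx (hlt.le.trans h1) (by simpa using hs)
        (by rw [inv_mul_cancel_left]; exact hh)
      simpa [mul_assoc] using this
    have := hmin' _ h2
    rw [← mul_assoc] at this
    linarith
  obtain ⟨P, hP1, hPc, hPS, hPt⟩ := exists_sheet hgeo (fun g : Γ => g • x₀) S hone hsymm (r₁ / 2)
    r₀ hr (by linarith) htrans hnear
  have hPg : ∀ g : Γ, P g (g • x₀) := by
    have step : ∀ g s : Γ, s ∈ S → P g (g • x₀) → P (g * s) ((g * s) • x₀) := by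
      intro g s hs hg
      obtain ⟨m, hm1, hm2⟩ := hgeo.midpoint_aux (g • x₀) ((g * s) • x₀)
      have hd : dist (g • x₀) ((g * s) • x₀) ≤ r₁ := by
        rw [mul_smul, (hiso g).dist_eq, dist_comm]
        exact ha s hs
      have hz : ∀ g : Γ, dist (g • x₀) (g • x₀) ≤ r₁ / 2 := fun g => by simp; linarith
      have h1 : P g m := hPc g _ m (hz g) (by linarith) hg
      have h2 : P (g * s) m := hPt g (g * s) m h1 (by linarith) (by simpa using hs)
      exact hPc (g * s) m _ (by linarith) (hz _) h2
    intro g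
    have hgm : g ∈ Subgroup.closure S := by rw [hgen]; trivial
    induction hgm using Subgroup.closure_induction_right with
    | one => exact hP1
    | mul_right x hx y hy ih => exact step x y hy ih
    | mul_inv_cancel x hx y hy ih => exact step x _ (hsymm y hy) ih
  have h1 : P 1 (g • x₀) := hPc 1 ((1 : Γ) • x₀) _ (by simp; linarith)
    (by simpa [dist_comm] using hg) hP1
  simpa using hPS 1 g _ h1 (hPg g)

theorem stmt_2
    {Γ X : Type*} [Group Γ] [MetricSpace X] [MulAction Γ X]
    (hiso : ∀ g : Γ, Isometry (fun x : X => g • x))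
    [SimplyConnectedSpace X] (hgeo : IsGeodesicSpace X)
    (S : Set Γ) (hfin : S.Finite) (hsymm : ∀ g ∈ S, g⁻¹ ∈ S)
    (hgen : Subgroup.closure S = ⊤)
    (x₀ : X)
    (FS : Set X) (hFS : FS = {x : X | ∀ g ∈ S, dist x₀ x ≤ dist (g • x₀) x})
    (hbdd : BddAbove ((fun x : X => dist x₀ x) '' FS))
    (r₀ : ℝ) (hr₀ : r₀ = sSup ((fun x : X => dist x₀ x) '' FS))
    (r₁ : ℝ) (hr₁ : 2 * r₀ < r₁)
    (ha : ∀ g ∈ S, dist (g • x₀) x₀ ≤ r₁)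
    (hb : ∀ g ∈ S, ∀ g' ∈ S, dist ((g * g') • x₀) x₀ ≤ r₁ → g * g' ∈ S)
    (hfaithful : ∀ g : Γ, g ≠ 1 → ∃ x : X, g • x ≠ x) :
    ∃ V : Set C(X, X), IsOpen V ∧
      (⟨fun x : X => (1 : Γ) • x, (hiso 1).continuous⟩ : C(X, X)) ∈ V ∧
      ∀ g : Γ, (⟨fun x : X => g • x, (hiso g).continuous⟩ : C(X, X)) ∈ V → g = 1 := by
  by_cases hne : S.Nonempty
  swap
  · refine ⟨Set.univ, isOpen_univ, trivial, fun g _ => ?_⟩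
    rw [Set.not_nonempty_iff_eq_empty] at hne
    have hgm : g ∈ Subgroup.closure S := by rw [hgen]; trivial
    rw [hne, Subgroup.closure_empty] at hgm
    exact Subgroup.mem_bot.1 hgm
  have hF : ∀ x, (∀ g ∈ S, dist x₀ x ≤ dist (g • x₀) x) → dist x₀ x ≤ r₀ := by
    intro x hx
    rw [hr₀]
    exact le_csSup hbdd ⟨x, by rw [hFS]; exact hx, rfl⟩
  have hr : 0 ≤ r₀ := by
    have := hF x₀ (fun g _ => by simp)
    simpa using this
  have key := mem_of_close hiso hgeo S hfin hne hsymm hgen x₀ r₀ r₁ hr hr₁ hF ha hb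
  choose! w hw using hfaithful
  refine ⟨{f | dist (f x₀) x₀ < r₁ / 2} ∩ ⋂ g ∈ S \ {1}, {f | f (w g) ≠ g • w g}, ?_, ?_, ?_⟩
  · refine IsOpen.inter ?_ ?_
    · exact isOpen_lt ((continuous_eval_const (F := C(X, X)) x₀).dist continuous_const)
        continuous_const
    · refine (hfin.subset Set.sdiff_subset).isOpen_biInter fun g _ => ?_
      exact isOpen_ne_fun (continuous_eval_const (F := C(X, X)) (w g)) continuous_const
  · refine ⟨?_, ?_⟩
    · simp; linarith
    · simp only [Set.mem_iInter]
      rintro g ⟨_, hg⟩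
      have := hw g hg
      simpa using this.symm
  · rintro g ⟨h1, h2⟩
    by_contra hg
    have hgS : g ∈ S := key g (le_of_lt h1)
    simp only [Set.mem_iInter] at h2
    exact h2 g ⟨hgS, hg⟩ rfl
end

section
/- Under these hypotheses, the group Γ is generated by the subset S₀ = {g ∈ S : d(g.0, 0) ≤ 2r₀}. -/
theorem stmt_3
    {Γ X : Type*} [Group Γ] [MetricSpace X] [MulAction Γ X]
    (hiso : ∀ g : Γ, Isometry (fun x : X => g • x))
    [SimplyConnectedSpace X] (hgeo : IsGeodesicSpace X)
    (S : Set Γ) (hfin : S.Finite) (hsymm : ∀ g ∈ S, g⁻¹ ∈ S)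
    (hgen : Subgroup.closure S = ⊤)
    (x₀ : X)
    (FS : Set X) (hFS : FS = {x : X | ∀ g ∈ S, dist x₀ x ≤ dist (g • x₀) x})
    (hbdd : BddAbove ((fun x : X => dist x₀ x) '' FS))
    (r₀ : ℝ) (hr₀ : r₀ = sSup ((fun x : X => dist x₀ x) '' FS))
    (r₁ : ℝ) (hr₁ : 2 * r₀ < r₁)
    (ha : ∀ g ∈ S, dist (g • x₀) x₀ ≤ r₁)
    (hb : ∀ g ∈ S, ∀ g' ∈ S, dist ((g * g') • x₀) x₀ ≤ r₁ → g * g' ∈ S) :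
    Subgroup.closure {g ∈ S | dist (g • x₀) x₀ ≤ 2 * r₀} = ⊤ := by
  have hd : ∀ (g : Γ) (x y : X), dist (g • x) (g • y) = dist x y :=
    fun g x y => (hiso g).dist_eq x y
  have hr0 : 0 ≤ r₀ := by
    rw [hr₀]
    apply Real.sSup_nonneg
    rintro _ ⟨x, _, rfl⟩
    exact dist_nonneg
  have hF : ∀ x ∈ FS, dist x₀ x ≤ r₀ := by
    intro x hx
    rw [hr₀]
    exact le_csSup hbdd ⟨x, hx, rfl⟩
  have key : ∀ g ∈ S, g ∈ Subgroup.closure {g ∈ S | dist (g • x₀) x₀ ≤ 2 * r₀} := by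
    by_contra! hcon
    obtain ⟨g, ⟨hgS, hgn⟩, hmin⟩ := Set.exists_min_image
      {g ∈ S | g ∉ Subgroup.closure {g ∈ S | dist (g • x₀) x₀ ≤ 2 * r₀}}
      (fun g => dist (g • x₀) x₀) (hfin.subset (Set.sep_subset _ _)) hcon
    have hmin' : ∀ h ∈ S, dist (h • x₀) x₀ < dist (g • x₀) x₀ →
        h ∈ Subgroup.closure {g ∈ S | dist (g • x₀) x₀ ≤ 2 * r₀} := by
      intro h hh hlt
      by_contra hn
      exact absurd (hmin h ⟨hh, hn⟩) (not_le.mpr hlt)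
    have hD : 2 * r₀ < dist (g • x₀) x₀ := by
      by_contra! hle
      exact hgn (Subgroup.subset_closure ⟨hgS, hle⟩)
    have hD1 := ha g hgS
    have h1 : (1 : Γ) ∈ S := by
      have := hb g hgS g⁻¹ (hsymm g hgS) (by simp; linarith)
      simpa using this
    obtain ⟨γ, hγ0, hγ1, hγ⟩ := hgeo x₀ (g • x₀)
    have hDc := dist_comm x₀ (g • x₀)
    set D := dist x₀ (g • x₀) with hDdef
    have hDpos : 0 < D := by linarith
    have e1 : dist x₀ (γ (D / 2)) = D / 2 := by
      have := hγ 0 ⟨le_rfl, hDpos.le⟩ (D / 2) ⟨by linarith, by linarith⟩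
      rw [hγ0] at this
      rw [this, abs_of_nonpos (by linarith)]; ring
    have e2 : dist (γ (D / 2)) (g • x₀) = D / 2 := by
      have := hγ (D / 2) ⟨by linarith, by linarith⟩ D ⟨hDpos.le, le_rfl⟩
      rw [hγ1] at this
      rw [this, abs_of_nonpos (by linarith)]; ring
    generalize γ (D / 2) = y at e1 e2
    obtain ⟨h, hhS, hhmin⟩ := Set.exists_min_image S (fun h => dist (h • x₀) y) hfin ⟨1, h1⟩
    have hhle : dist (h • x₀) y ≤ D / 2 := by
      have := hhmin 1 h1
      simp only [one_smul] at this
      linarith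
    have hyF : h⁻¹ • y ∈ FS := by
      rw [hFS]
      intro k hk
      rw [← hd h x₀, ← hd h (k • x₀), smul_inv_smul, smul_smul]
      by_contra! hlt
      have hkS : h * k ∈ S := by
        apply hb h hhS k hk
        have := dist_triangle ((h * k) • x₀) y x₀
        rw [dist_comm y x₀] at this
        linarith
      exact absurd (hhmin _ hkS) (not_le.mpr hlt)
    have hy : dist (h • x₀) y ≤ r₀ := by
      have := hF _ hyF
      rwa [← hd h x₀, smul_inv_smul] at this
    have t1 : dist (h • x₀) x₀ < D := by
      have := dist_triangle (h • x₀) y x₀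
      rw [dist_comm y x₀] at this
      linarith
    have t2 : dist ((h⁻¹ * g) • x₀) x₀ < D := by
      rw [← hd h, smul_smul, mul_inv_cancel_left, dist_comm]
      have := dist_triangle (h • x₀) y (g • x₀)
      linarith
    have hk : h⁻¹ * g ∈ S := hb _ (hsymm h hhS) g hgS (by linarith)
    have := mul_mem (hmin' h hhS (by linarith)) (hmin' _ hk (by linarith))
    rw [mul_inv_cancel_left] at this
    exact hgn this
  rw [eq_top_iff, ← hgen, Subgroup.closure_le]
  exact key
end
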